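/- For all integers n ≥ 1 and m ≥ 1, if the m-th derivative of Li_{−n} has a zero in the open unit disk {t ∈ ℂ : |t| < 1}, then so does the m-th derivative of Li_{−(n+1)}; equivalently, if the largest root r_{n,m} of A_{n,m} satisfies r_{n,m} > −1, then −1 < r_{n,m} < r_{n+1,m} < 0. In particular the sequence (m_0(n))_{n≥1} is monotonically increasing. -/

import Mathlib

open Polynomial

noncomputable section

/-- The polylogarithm of negative integer order: `Li_{−n}(t) = ∑_{k=1}^∞ k^n t^k`
(the `k = 0` term vanishes for `n ≥ 1`). -/
def fbhLi (n : ℕ) (t : ℂ) : ℂ := ∑' k : ℕ, (k : ℂ) ^ n * t ^ k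

/-!
Repeated application of `t d/dt` to the geometric series gives two closed forms,
`Dᵐ Li₋ₙ(t) = Aₙ(t) / (1 - t)ⁿ⁺ᵐ⁺¹ = Gₙ(t / (1 - t)) / (1 - t)ᵐ⁺¹`. Rolle's theorem applied to
`Xᵐ (1 + X) Gₙ`, whose derivative is `Xᵐ⁻¹ Gₙ₊₁`, shows inductively that `Gₙ` has only real roots,
so every zero of `Dᵐ Li₋ₙ` in the unit disk is a real root of `Aₙ`; such a root is negative
because `Aₙ` has nonnegative coefficients and `Aₙ(0) > 0`. Finally
`tᵐ Aₙ(t) / (1 - t)ⁿ⁺ᵐ⁺¹` vanishes at a root of `Aₙ` and at `0`, and its derivative is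
`tᵐ⁻¹ Aₙ₊₁(t) / (1 - t)ⁿ⁺ᵐ⁺²`, so Rolle's theorem yields a root of `Aₙ₊₁` strictly between.
-/

section Calculus

theorem one_sub_ne_zero_of_norm_lt_one {R : Type*} [SeminormedRing R] [NormOneClass R] {x : R}
    (hx : ‖x‖ < 1) : 1 - x ≠ 0 :=
  sub_ne_zero.2 fun h => by simp [← h] at hx

theorem eventually_norm_lt {E : Type*} [SeminormedAddGroup E] {x : E} {r : ℝ} (hx : ‖x‖ < r) :
    ∀ᶠ y in nhds x, ‖y‖ < r :=
  continuous_norm.continuousAt.eventually_lt_const hx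

variable {𝕜 E : Type*} [NontriviallyNormedField 𝕜] [NormedAddCommGroup E] [NormedSpace 𝕜 E]
  [CompleteSpace E] {f : 𝕜 → E} {z : 𝕜}

theorem hasDerivAt_iteratedDeriv_of_analyticAt (hf : AnalyticAt 𝕜 f z) (m : ℕ) :
    HasDerivAt (iteratedDeriv m f) (iteratedDeriv (m + 1) f z) z := by
  rw [iteratedDeriv_succ, iteratedDeriv_eq_iterate]
  exact (hf.iterated_deriv m).differentiableAt.hasDerivAt

theorem iteratedDeriv_id_smul_deriv (hf : AnalyticAt 𝕜 f z) (m : ℕ) :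
    iteratedDeriv m (fun w => w • deriv f w) z =
      z • iteratedDeriv (m + 1) f z + (m : 𝕜) • iteratedDeriv m f z := by
  induction m generalizing z with
  | zero => simp [iteratedDeriv_one]
  | succ m ih =>
    have ih_near : iteratedDeriv m (fun w => w • deriv f w) =ᶠ[nhds z] fun w =>
        w • iteratedDeriv (m + 1) f w + (m : 𝕜) • iteratedDeriv m f w := by
      filter_upwards [hf.eventually_analyticAt] with w hw using ih hw
    rw [iteratedDeriv_succ, ih_near.deriv_eq]
    refine (((hasDerivAt_id' z).smul (hasDerivAt_iteratedDeriv_of_analyticAt hf (m + 1))).add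
      ((hasDerivAt_iteratedDeriv_of_analyticAt hf m).const_smul (m : 𝕜))).deriv.trans ?_
    push_cast
    module

end Calculus

theorem splits_derivative {p : ℝ[X]} (hp : p.Splits) : (derivative p).Splits := by
  by_cases hdeg : p.natDegree = 0
  · rw [derivative_of_natDegree_zero hdeg]
    exact Splits.zero
  · rw [splits_iff_card_roots] at hp ⊢
    have := card_roots_le_derivative p
    have := card_roots' (derivative p)
    have := natDegree_derivative_lt hdeg
    omega

section Polylogarithm

variable {m n : ℕ} {t : ℂ}

theorem exists_summable_bound_ball (n : ℕ) (ht : ‖t‖ < 1) :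
    ∃ ρ : ℝ, t ∈ Metric.ball (0 : ℂ) ρ ∧ Summable (fun k : ℕ => (k : ℝ) ^ n * ρ ^ k) ∧
      ∀ k : ℕ, ∀ z ∈ Metric.ball (0 : ℂ) ρ, ‖(k : ℂ) ^ n * z ^ k‖ ≤ (k : ℝ) ^ n * ρ ^ k := by
  obtain ⟨ρ, htρ, hρ⟩ := exists_between ht
  have hρ_norm : ‖ρ‖ < 1 := by rwa [Real.norm_of_nonneg ((norm_nonneg t).trans htρ.le)]
  refine ⟨ρ, mem_ball_zero_iff.2 htρ, summable_pow_mul_geometric_of_norm_lt_one n hρ_norm,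
    fun k z hz => ?_⟩
  rw [norm_mul, norm_pow, norm_pow, Complex.norm_natCast]
  gcongr
  exact (mem_ball_zero_iff.1 hz).le

theorem differentiableAt_fbhLi (n : ℕ) (ht : ‖t‖ < 1) : DifferentiableAt ℂ (fbhLi n) t := by
  obtain ⟨ρ, htρ, hsum, hbound⟩ := exists_summable_bound_ball n ht
  exact (Complex.differentiableOn_tsum_of_summable_norm hsum (fun k => by fun_prop)
    Metric.isOpen_ball hbound).differentiableAt (Metric.isOpen_ball.mem_nhds htρ)

theorem analyticAt_fbhLi (n : ℕ) (ht : ‖t‖ < 1) : AnalyticAt ℂ (fbhLi n) t :=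
  Complex.analyticAt_iff_eventually_differentiableAt.2
    ((eventually_norm_lt ht).mono fun _ => differentiableAt_fbhLi n)

theorem fbhLi_succ (n : ℕ) (ht : ‖t‖ < 1) : fbhLi (n + 1) t = t * deriv (fbhLi n) t := by
  obtain ⟨ρ, htρ, hsum, hbound⟩ := exists_summable_bound_ball n ht
  have hderiv := (Complex.hasSum_deriv_of_summable_norm hsum (fun k => by fun_prop)
    Metric.isOpen_ball hbound htρ).mul_left t
  refine Eq.trans (tsum_congr fun k => ?_) hderiv.tsum_eq
  cases k with
  | zero => simp
  | succ k =>
    simp only [deriv_const_mul_field, deriv_pow_field, add_tsub_cancel_right, Nat.cast_add,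
      Nat.cast_one]
    ring

theorem fbhLi_zero (ht : ‖t‖ < 1) : fbhLi 0 t = (1 - t)⁻¹ := by
  simp [fbhLi, tsum_geometric_of_norm_lt_one ht]

theorem iteratedDeriv_fbhLi_succ (n m : ℕ) (ht : ‖t‖ < 1) :
    iteratedDeriv m (fbhLi (n + 1)) t =
      t * iteratedDeriv (m + 1) (fbhLi n) t + m * iteratedDeriv m (fbhLi n) t := by
  have hnear : fbhLi (n + 1) =ᶠ[nhds t] fun z => z * deriv (fbhLi n) z :=
    (eventually_norm_lt ht).mono fun _ => fbhLi_succ n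
  rw [hnear.iteratedDeriv_eq]
  exact iteratedDeriv_id_smul_deriv (analyticAt_fbhLi n ht) m

theorem iteratedDeriv_fbhLi_succ_of_closedForm {φ : ℂ → ℂ} {φ' : ℂ}
    (hφ : ∀ z : ℂ, ‖z‖ < 1 → iteratedDeriv m (fbhLi n) z = φ z) (ht : ‖t‖ < 1)
    (hφ' : HasDerivAt φ φ' t) :
    iteratedDeriv m (fbhLi (n + 1)) t = t * φ' + m * φ t := by
  have hnear : iteratedDeriv m (fbhLi n) =ᶠ[nhds t] φ := (eventually_norm_lt ht).mono hφ
  rw [iteratedDeriv_fbhLi_succ n m ht, hφ t ht, iteratedDeriv_succ, hnear.deriv_eq, hφ'.deriv]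

theorem iteratedDeriv_fbhLi_zero (m : ℕ) (ht : ‖t‖ < 1) :
    iteratedDeriv m (fbhLi 0) t = m.factorial / (1 - t) ^ (m + 1) := by
  have hnear : fbhLi 0 =ᶠ[nhds t] fun z => (1 - z)⁻¹ :=
    (eventually_norm_lt ht).mono fun _ => fbhLi_zero
  have h_exponent : (-1 - m : ℤ) = -((m + 1 : ℕ) : ℤ) := by push_cast; ring
  rw [hnear.iteratedDeriv_eq, iteratedDeriv_comp_const_sub m Inv.inv 1, iteratedDeriv_eq_iterate,
    iter_deriv_inv', h_exponent]
  simp only [zpow_neg, zpow_natCast, smul_eq_mul, ← mul_assoc, ← mul_pow, neg_one_mul, neg_neg,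
    one_pow, one_mul, div_eq_mul_inv]

end Polylogarithm

section ClosedForms

variable {t : ℂ}

/-- The polynomial `A_{n,m}`, the numerator of the `m`-th derivative of `Li_{−n}` over
`(1 - t) ^ (n + m + 1)`. -/
def polylogNumerator (m : ℕ) : ℕ → ℝ[X]
  | 0 => C (m.factorial : ℝ)
  | n + 1 => X * (1 - X) * derivative (polylogNumerator m n) +
      (C (m : ℝ) + C (n + 1 : ℝ) * X) * polylogNumerator m n

/-- The polynomial `G` expressing the `m`-th derivative of `Li_{−n}` at `t` as
`G(t / (1 - t)) / (1 - t) ^ (m + 1)`; for `m = 0` it is the geometric (Fubini) polynomial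
`∑ k, S(n, k) k! X ^ k`. -/
def geometricPolynomial (m : ℕ) : ℕ → ℝ[X]
  | 0 => C (m.factorial : ℝ)
  | n + 1 => X * (1 + X) * derivative (geometricPolynomial m n) +
      (C (m : ℝ) + C (m + 1 : ℝ) * X) * geometricPolynomial m n

theorem iteratedDeriv_fbhLi_eq_polylogNumerator (m n : ℕ) (ht : ‖t‖ < 1) :
    iteratedDeriv m (fbhLi n) t = aeval t (polylogNumerator m n) / (1 - t) ^ (n + m + 1) := by
  induction n generalizing t with
  | zero => simp [iteratedDeriv_fbhLi_zero m ht, polylogNumerator]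
  | succ n ih =>
    have hne := one_sub_ne_zero_of_norm_lt_one ht
    have hderiv := ((polylogNumerator m n).hasDerivAt_aeval t).div
      (((hasDerivAt_id' t).const_sub 1).fun_pow (n + m + 1)) (pow_ne_zero _ hne)
    rw [iteratedDeriv_fbhLi_succ_of_closedForm (fun z hz => ih hz) ht hderiv,
      show n + 1 + m + 1 = (n + m + 1) + 1 by ring]
    simp only [polylogNumerator, map_add, map_mul, map_sub, map_one, aeval_X, aeval_C,
      Complex.coe_algebraMap, Nat.add_sub_cancel]
    push_cast
    field_simp
    ring

theorem iteratedDeriv_fbhLi_eq_geometricPolynomial (m n : ℕ) (ht : ‖t‖ < 1) :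
    iteratedDeriv m (fbhLi n) t =
      aeval (t / (1 - t)) (geometricPolynomial m n) / (1 - t) ^ (m + 1) := by
  induction n generalizing t with
  | zero => simp [iteratedDeriv_fbhLi_zero m ht, geometricPolynomial]
  | succ n ih =>
    have hne := one_sub_ne_zero_of_norm_lt_one ht
    have hsubst : HasDerivAt (fun z : ℂ => z / (1 - z)) (1 / (1 - t) ^ 2) t :=
      ((hasDerivAt_id' t).div ((hasDerivAt_id' t).const_sub 1) hne).congr_deriv (by ring)
    have hderiv := (((geometricPolynomial m n).hasDerivAt_aeval (t / (1 - t))).comp t hsubst).div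
      (((hasDerivAt_id' t).const_sub 1).fun_pow (m + 1)) (pow_ne_zero _ hne)
    rw [iteratedDeriv_fbhLi_succ_of_closedForm (fun z hz => ih hz) ht hderiv]
    simp only [geometricPolynomial, map_add, map_mul, map_one, aeval_X, aeval_C,
      Complex.coe_algebraMap, Nat.add_sub_cancel, Function.comp_apply]
    generalize aeval (t / (1 - t)) (geometricPolynomial m n) = g
    generalize aeval (t / (1 - t)) (derivative (geometricPolynomial m n)) = g'
    push_cast
    field_simp
    ring

end ClosedForms

section RealZeros

variable {m n : ℕ}

theorem X_pow_mul_geometricPolynomial_succ (m n : ℕ) :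
    X ^ m * geometricPolynomial m (n + 1) =
      X * derivative (X ^ m * ((1 + X) * geometricPolynomial m n)) := by
  cases m <;> simp only [geometricPolynomial, derivative_mul, derivative_X_pow,
    derivative_one, derivative_X, map_add, map_one, map_natCast, Nat.add_sub_cancel] <;>
    push_cast <;> ring

theorem splits_geometricPolynomial (m n : ℕ) : (geometricPolynomial m n).Splits := by
  induction n with
  | zero => exact Splits.C _
  | succ n ih =>
    have h_linear : ((1 : ℝ[X]) + X).Splits := Splits.of_natDegree_le_one (by compute_degree)
    have h_product := Splits.X.mul
      (splits_derivative ((Splits.X_pow (R := ℝ) m).mul (h_linear.mul ih)))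
    rw [← X_pow_mul_geometricPolynomial_succ] at h_product
    exact (splits_mul_iff_right (pow_ne_zero _ X_ne_zero) (Splits.X_pow m)).1 h_product

theorem eval_neg_one_geometricPolynomial (m n : ℕ) :
    (geometricPolynomial m n).eval (-1) = (-1) ^ n * m.factorial := by
  induction n with
  | zero => simp [geometricPolynomial]
  | succ n ih =>
    simp only [geometricPolynomial, eval_add, eval_mul, eval_X, eval_one, eval_C, ih]
    ring

theorem geometricPolynomial_ne_zero (m n : ℕ) : geometricPolynomial m n ≠ 0 := by
  intro h
  have := eval_neg_one_geometricPolynomial m n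
  simp [h, Nat.factorial_ne_zero] at this

theorem exists_ofReal_eq_of_iteratedDeriv_fbhLi_eq_zero {t : ℂ} (ht : ‖t‖ < 1)
    (hzero : iteratedDeriv m (fbhLi n) t = 0) : ∃ x : ℝ, (x : ℂ) = t := by
  have hne := one_sub_ne_zero_of_norm_lt_one ht
  rw [iteratedDeriv_fbhLi_eq_geometricPolynomial m n ht,
    div_eq_zero_iff, or_iff_left (pow_ne_zero _ hne)] at hzero
  obtain ⟨v, hv⟩ := (splits_geometricPolynomial m n).mem_range_of_isRoot
    (i := algebraMap ℝ ℂ) (geometricPolynomial_ne_zero m n)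
    (by rwa [IsRoot.def, eval_map_algebraMap])
  rw [Complex.coe_algebraMap] at hv
  have h_one_add : (1 + v : ℂ) = (1 - t)⁻¹ := by rw [hv]; field_simp; ring
  refine ⟨v / (1 + v), ?_⟩
  push_cast
  rw [h_one_add, hv]
  field_simp

theorem iteratedDeriv_fbhLi_ofReal_eq_zero_iff {x : ℝ} (hx : |x| < 1) :
    iteratedDeriv m (fbhLi n) x = 0 ↔ (polylogNumerator m n).IsRoot x := by
  have hx' : ‖(x : ℂ)‖ < 1 := by rwa [Complex.norm_real]
  rw [iteratedDeriv_fbhLi_eq_polylogNumerator m n hx', div_eq_zero_iff,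
    or_iff_left (pow_ne_zero _ (one_sub_ne_zero_of_norm_lt_one hx')), ← Complex.coe_algebraMap,
    aeval_algebraMap_apply, map_eq_zero_iff _ (algebraMap ℝ ℂ).injective, coe_aeval_eq_eval,
    IsRoot.def]

theorem exists_iteratedDeriv_fbhLi_eq_zero_iff :
    (∃ t : ℂ, ‖t‖ < 1 ∧ iteratedDeriv m (fbhLi n) t = 0) ↔
      ∃ x : ℝ, |x| < 1 ∧ (polylogNumerator m n).IsRoot x := by
  constructor
  · rintro ⟨t, ht, hzero⟩
    obtain ⟨x, rfl⟩ := exists_ofReal_eq_of_iteratedDeriv_fbhLi_eq_zero ht hzero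
    rw [Complex.norm_real] at ht
    exact ⟨x, ht, (iteratedDeriv_fbhLi_ofReal_eq_zero_iff ht).1 hzero⟩
  · rintro ⟨x, hx, hroot⟩
    exact ⟨x, by rwa [Complex.norm_real], (iteratedDeriv_fbhLi_ofReal_eq_zero_iff hx).2 hroot⟩

theorem eq_polylogNumerator_of_iteratedDeriv_fbhLi_eq {P : ℝ[X]}
    (hP : ∀ t : ℂ, ‖t‖ < 1 →
      iteratedDeriv m (fbhLi n) t = aeval t P / (1 - t) ^ (n + m + 1)) :
    P = polylogNumerator m n := by
  refine eq_of_infinite_eval_eq _ _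
    ((Set.Ioo_infinite (neg_lt_self (zero_lt_one (α := ℝ)))).mono ?_)
  intro x hx
  have hx' : ‖(x : ℂ)‖ < 1 := by rwa [Complex.norm_real, Real.norm_eq_abs, abs_lt]
  have h := hP x hx'
  rw [iteratedDeriv_fbhLi_eq_polylogNumerator m n hx',
    div_left_inj' (pow_ne_zero _ (one_sub_ne_zero_of_norm_lt_one hx')), ← Complex.coe_algebraMap,
    aeval_algebraMap_apply, aeval_algebraMap_apply] at h
  exact ((algebraMap ℝ ℂ).injective h).symm

end RealZeros

section Roots

variable {m n : ℕ}

theorem coeff_zero_polylogNumerator (m n : ℕ) :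
    (polylogNumerator m n).coeff 0 = m ^ n * m.factorial := by
  induction n with
  | zero => simp [polylogNumerator]
  | succ n ih =>
    simp only [polylogNumerator, coeff_add, mul_coeff_zero, coeff_X_zero, coeff_C_zero, ih]
    ring

theorem coeff_succ_polylogNumerator_succ (m n k : ℕ) :
    (polylogNumerator m (n + 1)).coeff (k + 1) =
      (k + 1 + m) * (polylogNumerator m n).coeff (k + 1) +
        (n + 1 - k) * (polylogNumerator m n).coeff k := by
  have h_expand : polylogNumerator m (n + 1) =
      X * derivative (polylogNumerator m n) - X * (X * derivative (polylogNumerator m n)) +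
        C (m : ℝ) * polylogNumerator m n + C (n + 1 : ℝ) * (X * polylogNumerator m n) := by
    rw [polylogNumerator]; ring
  rw [h_expand]
  cases k <;> simp only [coeff_add, coeff_sub, coeff_X_mul, coeff_C_mul, coeff_derivative,
    coeff_X_mul_zero] <;> push_cast <;> ring

theorem coeff_polylogNumerator_eq_zero {k : ℕ} (hk : n < k) :
    (polylogNumerator m n).coeff k = 0 := by
  induction n generalizing k with
  | zero => simp [polylogNumerator, hk.ne']
  | succ n ih =>
    obtain ⟨k, rfl⟩ := Nat.exists_eq_add_one_of_ne_zero (Nat.ne_zero_of_lt hk)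
    rw [coeff_succ_polylogNumerator_succ, ih (by omega), ih (by omega)]
    ring

theorem coeff_polylogNumerator_nonneg (m n k : ℕ) : 0 ≤ (polylogNumerator m n).coeff k := by
  induction n generalizing k with
  | zero => rw [polylogNumerator, coeff_C]; positivity
  | succ n ih =>
    rcases k with _ | k
    · rw [coeff_zero_polylogNumerator]; positivity
    rw [coeff_succ_polylogNumerator_succ]
    rcases lt_or_ge n k with hk | hk
    · rw [coeff_polylogNumerator_eq_zero hk,
        coeff_polylogNumerator_eq_zero (hk.trans k.lt_succ_self)]
      simp
    · have hcoef : (0 : ℝ) ≤ n + 1 - k := by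
        have : (k : ℝ) ≤ n := by exact_mod_cast hk
        linarith
      exact add_nonneg (mul_nonneg (by positivity) (ih _)) (mul_nonneg hcoef (ih _))

theorem eval_polylogNumerator_pos (hm : 1 ≤ m) (n : ℕ) {x : ℝ} (hx : 0 ≤ x) :
    0 < (polylogNumerator m n).eval x := by
  rw [eval_eq_sum_range, Finset.sum_range_succ', coeff_zero_polylogNumerator, pow_zero, mul_one]
  refine add_pos_of_nonneg_of_pos (Finset.sum_nonneg fun k _ => ?_) (by positivity)
  exact mul_nonneg (coeff_polylogNumerator_nonneg m n _) (pow_nonneg hx _)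

theorem neg_of_isRoot_polylogNumerator (hm : 1 ≤ m) {x : ℝ}
    (hx : (polylogNumerator m n).IsRoot x) : x < 0 :=
  not_le.1 fun h => (eval_polylogNumerator_pos hm n h).ne' hx

theorem hasDerivAt_pow_mul_polylogNumerator_div (m n : ℕ) {x : ℝ} (hx : x ≠ 1) :
    HasDerivAt (fun y : ℝ => y ^ (m + 1) * (polylogNumerator (m + 1) n).eval y /
        (1 - y) ^ (n + m + 2))
      (x ^ m * (polylogNumerator (m + 1) (n + 1)).eval x / (1 - x) ^ (n + m + 3)) x := by
  have hne : 1 - x ≠ 0 := sub_ne_zero.2 hx.symm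
  have hderiv := ((hasDerivAt_pow (m + 1) x).fun_mul
    ((polylogNumerator (m + 1) n).hasDerivAt x)).fun_div
    (((hasDerivAt_id' x).const_sub 1).fun_pow (n + m + 2)) (pow_ne_zero _ hne)
  refine hderiv.congr_deriv ?_
  simp only [polylogNumerator, eval_add, eval_mul, eval_sub, eval_one, eval_X, eval_C,
    Nat.add_sub_cancel]
  push_cast
  field_simp
  ring

theorem exists_isRoot_polylogNumerator_succ (hm : 1 ≤ m) {r : ℝ}
    (hr : (polylogNumerator m n).IsRoot r) :
    ∃ c ∈ Set.Ioo r 0, (polylogNumerator m (n + 1)).IsRoot c := by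
  have hr_neg := neg_of_isRoot_polylogNumerator hm hr
  obtain ⟨m, rfl⟩ := Nat.exists_eq_add_of_le' hm
  have hderiv {x : ℝ} (hx : x ≤ 0) :=
    hasDerivAt_pow_mul_polylogNumerator_div m n (hx.trans_lt one_pos).ne
  obtain ⟨c, hc, hc_zero⟩ := exists_hasDerivAt_eq_zero hr_neg
    (fun x hx => (hderiv hx.2).continuousAt.continuousWithinAt)
    (by simp [hr.eq_zero]) (fun x hx => hderiv hx.2.le)
  have hne : 1 - c ≠ 0 := by linarith [hc.2]
  rw [div_eq_zero_iff, or_iff_left (pow_ne_zero _ hne), mul_eq_zero,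
    or_iff_right (pow_ne_zero _ hc.2.ne)] at hc_zero
  exact ⟨c, hc, hc_zero⟩

theorem exists_iteratedDeriv_fbhLi_succ_eq_zero (hm : 1 ≤ m)
    (h : ∃ t : ℂ, ‖t‖ < 1 ∧ iteratedDeriv m (fbhLi n) t = 0) :
    ∃ t : ℂ, ‖t‖ < 1 ∧ iteratedDeriv m (fbhLi (n + 1)) t = 0 := by
  rw [exists_iteratedDeriv_fbhLi_eq_zero_iff] at h ⊢
  obtain ⟨x, hx, hroot⟩ := h
  obtain ⟨c, hc, hc_root⟩ := exists_isRoot_polylogNumerator_succ hm hroot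
  exact ⟨c, abs_lt.2 ⟨(abs_lt.1 hx).1.trans hc.1, hc.2.trans one_pos⟩, hc_root⟩

end Roots

theorem statement19_general (n m : ℕ) (hm : 1 ≤ m) (P Q : ℝ[X])
    (hP : ∀ t : ℂ, ‖t‖ < 1 →
      iteratedDeriv m (fbhLi n) t = aeval t P / (1 - t) ^ (n + m + 1))
    (hQ : ∀ t : ℂ, ‖t‖ < 1 →
      iteratedDeriv m (fbhLi (n + 1)) t = aeval t Q / (1 - t) ^ ((n + 1) + m + 1))
    (r s : ℝ) (hr : P.IsRoot r) (hs : Q.IsRoot s ∧ ∀ x : ℝ, Q.IsRoot x → x ≤ s)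
    (m₀ : ℕ → ℕ)
    (hm₀ : ∀ k, 1 ≤ k → (1 ≤ m₀ k ∧ ∀ j : ℕ, 1 ≤ j →
      ((∀ t : ℂ, ‖t‖ < 1 → iteratedDeriv j (fbhLi k) t ≠ 0) ↔ m₀ k ≤ j))) :
    ((∃ t : ℂ, ‖t‖ < 1 ∧ iteratedDeriv m (fbhLi n) t = 0) →
      (∃ t : ℂ, ‖t‖ < 1 ∧ iteratedDeriv m (fbhLi (n + 1)) t = 0)) ∧
    (r < s ∧ s < 0) ∧
    (∀ k, 1 ≤ k → m₀ k ≤ m₀ (k + 1)) := by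
  refine ⟨exists_iteratedDeriv_fbhLi_succ_eq_zero hm, ?_, fun k hk => ?_⟩
  · rw [eq_polylogNumerator_of_iteratedDeriv_fbhLi_eq hP] at hr
    rw [eq_polylogNumerator_of_iteratedDeriv_fbhLi_eq hQ] at hs
    obtain ⟨c, hc, hc_root⟩ := exists_isRoot_polylogNumerator_succ hm hr
    exact ⟨hc.1.trans_le (hs.2 c hc_root), neg_of_isRoot_polylogNumerator hm hs.1⟩
  · obtain ⟨h_one_le, h_threshold⟩ := hm₀ (k + 1) (by omega)
    refine ((hm₀ k hk).2 (m₀ (k + 1)) h_one_le).1 fun t ht hzero => ?_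
    obtain ⟨u, hu, hu_zero⟩ := exists_iteratedDeriv_fbhLi_succ_eq_zero h_one_le ⟨t, ht, hzero⟩
    exact (h_threshold _ h_one_le).2 le_rfl u hu hu_zero

/-- For `n, m ≥ 1`: if the `m`-th derivative of `Li_{−n}` has a zero in the open unit
disk, then so does the `m`-th derivative of `Li_{−(n+1)}`; equivalently, writing `r`
(resp. `s`) for the largest root `r_{n,m}` of `A_{n,m}` (here `P`) (resp. `r_{n+1,m}` of
`A_{n+1,m}`, here `Q`), if `r > −1` then `−1 < r < s < 0`.  In particular, the sequence
`(m₀ k)_{k ≥ 1}` — where `m₀ k` is the unique positive integer such that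
`(d^j/dt^j) Li_{−k}` has no zeros in the open unit disk iff `j ≥ m₀ k` — is
monotonically increasing. -/
theorem statement19 (n m : ℕ) (hn : 1 ≤ n) (hm : 1 ≤ m) (P Q : Polynomial ℝ)
    (hPdeg : P.natDegree = n) (hQdeg : Q.natDegree = n + 1)
    (hP : ∀ t : ℂ, ‖t‖ < 1 →
      iteratedDeriv m (fbhLi n) t = Polynomial.aeval t P / (1 - t) ^ (n + m + 1))
    (hQ : ∀ t : ℂ, ‖t‖ < 1 →
      iteratedDeriv m (fbhLi (n + 1)) t = Polynomial.aeval t Q / (1 - t) ^ ((n + 1) + m + 1))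
    (r s : ℝ)
    (hr : P.IsRoot r ∧ ∀ x : ℝ, P.IsRoot x → x ≤ r)
    (hs : Q.IsRoot s ∧ ∀ x : ℝ, Q.IsRoot x → x ≤ s)
    (m₀ : ℕ → ℕ)
    (hm₀ : ∀ k, 1 ≤ k → (1 ≤ m₀ k ∧ ∀ j : ℕ, 1 ≤ j →
      ((∀ t : ℂ, ‖t‖ < 1 → iteratedDeriv j (fbhLi k) t ≠ 0) ↔ m₀ k ≤ j))) :
    ((∃ t : ℂ, ‖t‖ < 1 ∧ iteratedDeriv m (fbhLi n) t = 0) →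
      (∃ t : ℂ, ‖t‖ < 1 ∧ iteratedDeriv m (fbhLi (n + 1)) t = 0)) ∧
    (-1 < r → (-1 < r ∧ r < s ∧ s < 0)) ∧
    (∀ k, 1 ≤ k → m₀ k ≤ m₀ (k + 1)) := by
  obtain ⟨h_zero, h_roots, h_mono⟩ := statement19_general n m hm P Q hP hQ r s hr.1 hs m₀ hm₀
  exact ⟨h_zero, fun h => ⟨h, h_roots⟩, h_mono⟩
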